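/- Let f, g : ℝⁿ → [0,∞) be upper semicontinuous log-concave functions with 0 < ∫_{ℝⁿ} f dx < ∞, and for m ∈ ℕ define g_m(x) = g(x) if |x| ≤ m and g_m(x) = 0 otherwise. Then δ(f, g_m) is nondecreasing in m and lim_{m→∞} δ(f, g_m) = δ(f, g), as limits in (−∞, +∞]. -/

import Mathlib

open MeasureTheory Set Filter Topology Pointwise
open scoped ENNReal RealInnerProductSpace NNReal

noncomputable section

/-- Euclidean space ℝⁿ. -/
abbrev Euc (n : ℕ) := EuclideanSpace ℝ (Fin n)

/-- A nonnegative function is log-concave if `f((1-λ)x+λy) ≥ f(x)^{1-λ} f(y)^λ`. -/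
def LogConcaveFn {n : ℕ} (f : Euc n → ℝ) : Prop :=
  ∀ x y : Euc n, ∀ l : ℝ, 0 ≤ l → l ≤ 1 →
    f x ^ (1 - l) * f y ^ l ≤ f ((1 - l) • x + l • y)

/-- Sup-convolution `(f⋆g)(x) = sup_y f(y) g(x-y)`, valued in `[0,∞]`. -/
def supConv {n : ℕ} (f g : Euc n → ℝ) (x : Euc n) : ℝ≥0∞ :=
  ⨆ y : Euc n, ENNReal.ofReal (f y * g (x - y))

/-- Dilation `(t·g)(x) = g(x/t)^t`. -/
def dil {n : ℕ} (t : ℝ) (g : Euc n → ℝ) (x : Euc n) : ℝ :=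
  g (t⁻¹ • x) ^ t

/-- Total mass `∫ f` of a nonnegative function, in `[0,∞]`. -/
def totalMass {n : ℕ} (f : Euc n → ℝ) : ℝ≥0∞ := ∫⁻ x, ENNReal.ofReal (f x)

/-- The difference quotient `(∫ f⋆(t·g) − ∫ f)/t`, valued in `EReal`. -/
def deltaQuot {n : ℕ} (f g : Euc n → ℝ) (t : ℝ) : EReal :=
  ((t⁻¹ : ℝ) : EReal) *
    (((∫⁻ x, supConv f (dil t g) x : ℝ≥0∞) : EReal) - ((totalMass f : ℝ≥0∞) : EReal))

/-- The support `K_f`: closure of `{x : f(x) > 0}`. -/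
def spt {n : ℕ} (f : Euc n → ℝ) : Set (Euc n) := closure {x | 0 < f x}

/-- `φ = -log f`. -/
def mlog {n : ℕ} (f : Euc n → ℝ) (x : Euc n) : ℝ := -Real.log (f x)

/-- The measure `μ_f`: pushforward of `f dx` under the (a.e. defined) gradient of `φ = -log f`. -/
def muF {n : ℕ} (f : Euc n → ℝ) : Measure (Euc n) :=
  Measure.map (gradient (mlog f)) (volume.withDensity fun x => ENNReal.ofReal (f x))

-- The outer unit normal (Gauss) map of a convex set `K`, defined (H^{n-1}-a.e. uniquely)
-- at boundary points; junk value `0` where no outer normal exists.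
open Classical in
def gaussMap {n : ℕ} (K : Set (Euc n)) (x : Euc n) : Euc n :=
  if h : ∃ u : Euc n, ‖u‖ = 1 ∧ ∀ y ∈ K, ⟪y - x, u⟫ ≤ 0 then h.choose else 0

/-- The weighted boundary measure `f · H^{n-1}|_{∂K_f}`. -/
def bdryMeasure {n : ℕ} (f : Euc n → ℝ) : Measure (Euc n) :=
  ((μH[(n : ℝ) - 1] : Measure (Euc n)).restrict (frontier (spt f))).withDensity
    (fun x => ENNReal.ofReal (f x))

/-- The measure `ν_f` on the sphere: pushforward of `f · H^{n-1}|_{∂K_f}` under the Gauss map. -/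
def nuF {n : ℕ} (f : Euc n → ℝ) : Measure (Euc n) :=
  Measure.map (gaussMap (spt f)) (bdryMeasure f)

/-- Positive part of an extended real, in `[0,∞]`. -/
def epos (a : EReal) : ℝ≥0∞ := if a = ⊤ then ⊤ else ENNReal.ofReal a.toReal

/-- Integral of an `EReal`-valued function: positive part minus negative part. -/
def eInt {n : ℕ} (μ : Measure (Euc n)) (h : Euc n → EReal) : EReal :=
  ((∫⁻ x, epos (h x) ∂μ : ℝ≥0∞) : EReal) - ((∫⁻ x, epos (-(h x)) ∂μ : ℝ≥0∞) : EReal)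

/-- The support function `h_g = (-log g)^*` of a log-concave function, valued in `EReal`. -/
def hSupp {n : ℕ} (g : Euc n → ℝ) (x : Euc n) : EReal :=
  ⨆ y : Euc n, (((⟪x, y⟫ : ℝ) : EReal) +
    (if g y = 0 then (⊥ : EReal) else ((Real.log (g y) : ℝ) : EReal)))

/-- The support function of a set, valued in `EReal`. -/
def hSetE {n : ℕ} (K : Set (Euc n)) (x : Euc n) : EReal :=
  ⨆ y ∈ K, ((⟪y, x⟫ : ℝ) : EReal)

/-- The support function of a set, real-valued: `h_K(x) = sup_{y ∈ K} ⟨y, x⟩`. -/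
def hSetR {n : ℕ} (K : Set (Euc n)) (x : Euc n) : ℝ :=
  sSup ((fun y => ⟪y, x⟫) '' K)

/-- Divergence of a vector field: the trace of its derivative. -/
def dvg {n : ℕ} (Φ : Euc n → Euc n) (x : Euc n) : ℝ :=
  LinearMap.trace ℝ (Euc n) (fderiv ℝ Φ x : Euc n →ₗ[ℝ] Euc n)

/-- The anisotropic total variation `TV_L(f)`. -/
def TVL {n : ℕ} (L : Set (Euc n)) (f : Euc n → ℝ) : EReal :=
  ⨆ Φ : {Φ : Euc n → Euc n //
      ContDiff ℝ 1 Φ ∧ HasCompactSupport Φ ∧ ∀ x, gauge L (Φ x) ≤ 1},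
    ((∫ x, f x * dvg Φ.1 x : ℝ) : EReal)

/-- The anisotropic perimeter `Per_L(A) = TV_L(1_A)`. -/
def PerL {n : ℕ} (L : Set (Euc n)) (A : Set (Euc n)) : EReal :=
  TVL L (A.indicator fun _ => (1 : ℝ))

/-- The surface area measure `S_F` of a convex body: pushforward of `H^{n-1}|_{∂F}`
under the Gauss map. -/
def surfMeasure {n : ℕ} (F : Set (Euc n)) : Measure (Euc n) :=
  Measure.map (gaussMap F) ((μH[(n : ℝ) - 1] : Measure (Euc n)).restrict (frontier F))

/-!
Write `M(t) = ∫ f⋆(t·g)` for `t > 0` and `M(0) = ∫ f`. The Prékopa–Leindler inequality gives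
`M(l t) ≥ M(0)^(1-l) M(t)^l` for `0 < l < 1`, so the rate `(M(t)/M(0))^(1/t)` is nonincreasing in
`t` and tends, as `t → 0⁺`, to its supremum `R(f, g)` over `t > 0`. Since `(a^t - 1)/t` decreases
to `log a`, this identifies the first variation as `δ(f, g) = M(0) log R(f, g)`. When `g_m ↑ g`
pointwise, every `M(t)` for `g` is the supremum of those for `g_m`, and two suprema commute, so
`R(f, g_m) ↑ R(f, g)`.
-/

theorem iSup_ennreal_rpow {ι : Sort*} {p : ℝ} (hp : 0 < p) (u : ι → ℝ≥0∞) :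
    (⨆ i, u i) ^ p = ⨆ i, u i ^ p :=
  (ENNReal.orderIsoRpow p hp).map_iSup u

theorem min_le_rpow_mul_rpow {l : ℝ} (hl : l ∈ Ioo 0 1) (p q : ℝ≥0∞) :
    min p q ≤ p ^ (1 - l) * q ^ l := by
  have h1l : 0 ≤ 1 - l := sub_nonneg.2 hl.2.le
  calc min p q = min p q ^ (1 - l) * min p q ^ l := by
        rw [← ENNReal.rpow_add_of_nonneg _ _ h1l hl.1.le, sub_add_cancel, ENNReal.rpow_one]
    _ ≤ p ^ (1 - l) * q ^ l :=
        mul_le_mul' (ENNReal.rpow_le_rpow (min_le_left p q) h1l)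
          (ENNReal.rpow_le_rpow (min_le_right p q) hl.1.le)

theorem rpow_mul_rpow_le_mul_add_mul {l : ℝ} (hl : l ∈ Ioo 0 1) (p q : ℝ≥0∞) :
    p ^ (1 - l) * q ^ l ≤ ENNReal.ofReal (1 - l) * p + ENNReal.ofReal l * q := by
  have h1l : 0 < 1 - l := sub_pos.2 hl.2
  induction p with
  | top => simp [ENNReal.mul_top, hl.2]
  | coe p =>
    induction q with
    | top => simp [ENNReal.mul_top, hl.1]
    | coe q =>
      have amgm := NNReal.geom_mean_le_arith_mean2_weighted (1 - l).toNNReal l.toNNReal p q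
        (by ext; simp [hl.1.le, h1l.le])
      simp only [Real.coe_toNNReal _ hl.1.le, Real.coe_toNNReal _ h1l.le] at amgm
      rw [← ENNReal.coe_rpow_of_nonneg _ h1l.le, ← ENNReal.coe_rpow_of_nonneg _ hl.1.le]
      simp only [ENNReal.ofReal]
      exact_mod_cast amgm

theorem div_rpow_le_div_of_rpow_mul_rpow_le {l : ℝ} (hl : 0 ≤ l) {a b c : ℝ≥0∞} (ha0 : a ≠ 0)
    (ha : a ≠ ⊤) (h : a ^ (1 - l) * b ^ l ≤ c) : (b / a) ^ l ≤ c / a := by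
  have hsplit : a ^ (1 - l) = a / a ^ l := by rw [ENNReal.rpow_sub _ _ ha0 ha, ENNReal.rpow_one]
  rw [ENNReal.le_div_iff_mul_le (.inl ha0) (.inl ha), ENNReal.div_rpow_of_nonneg _ _ hl]
  calc b ^ l / a ^ l * a = a ^ (1 - l) * b ^ l := by
        rw [hsplit, ENNReal.div_eq_inv_mul, ENNReal.div_eq_inv_mul]
        ring
    _ ≤ c := h

section LayerCake

variable {α : Type*} [MeasurableSpace α] {μ : Measure α}

theorem volume_restrict_Ioi_setOf_ofReal_lt (a : ℝ≥0∞) :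
    (volume.restrict (Ioi 0)) {t : ℝ | ENNReal.ofReal t < a} = a := by
  rw [Measure.restrict_apply (measurableSet_lt ENNReal.measurable_ofReal measurable_const)]
  induction a with
  | top => simp
  | coe a =>
    have hslice : {t : ℝ | ENNReal.ofReal t < a} ∩ Ioi 0 = Ioo 0 (a : ℝ) := by
      ext t
      rw [inter_comm]
      refine and_congr_right fun ht => ?_
      rw [mem_ofPred_eq, ← ENNReal.ofReal_coe_nnreal,
        ENNReal.ofReal_lt_ofReal_iff_of_nonneg (le_of_lt ht)]
    simp [hslice]

theorem lintegral_eq_lintegral_measure_ofReal_lt [SFinite μ] {u : α → ℝ≥0∞}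
    (hu : Measurable u) :
    ∫⁻ x, u x ∂μ = ∫⁻ t in Ioi (0 : ℝ), μ {x | ENNReal.ofReal t < u x} := by
  have hsubgraph : MeasurableSet {p : α × ℝ | ENNReal.ofReal p.2 < u p.1} :=
    measurableSet_lt (by fun_prop) (by fun_prop)
  calc ∫⁻ x, u x ∂μ
      = ∫⁻ x, volume.restrict (Ioi 0) {t : ℝ | ENNReal.ofReal t < u x} ∂μ := by
        simp only [volume_restrict_Ioi_setOf_ofReal_lt]
    _ = μ.prod (volume.restrict (Ioi 0)) {p : α × ℝ | ENNReal.ofReal p.2 < u p.1} :=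
        (Measure.prod_apply hsubgraph).symm
    _ = ∫⁻ t in Ioi (0 : ℝ), μ {x | ENNReal.ofReal t < u x} :=
        Measure.prod_apply_symm hsubgraph

theorem tendsto_lintegral_min_natCast {u : α → ℝ≥0∞} (hu : Measurable u) :
    Tendsto (fun k : ℕ => ∫⁻ x, min (u x) k ∂μ) atTop (𝓝 (∫⁻ x, u x ∂μ)) := by
  refine lintegral_tendsto_of_tendsto_of_monotone (fun k => by fun_prop) ?_ ?_
  · exact .of_forall fun x i j hij => min_le_min_left _ (Nat.cast_le.2 hij)
  · refine .of_forall fun x => ?_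
    simpa using (tendsto_const_nhds (x := u x)).min ENNReal.tendsto_nat_nhds_top

theorem exists_measurable_ge_ae_eq {β : Type*} [MeasurableSpace β] [Preorder β] [OrderTop β]
    {w : α → β} (hw : AEMeasurable w μ) : ∃ w', Measurable w' ∧ w ≤ w' ∧ w =ᵐ[μ] w' := by
  classical
  obtain ⟨N, hN, hNmeas, hN0⟩ := exists_measurable_superset_of_null hw.ae_eq_mk
  refine ⟨N.piecewise (fun _ => ⊤) (hw.mk w),
    measurable_const.piecewise hNmeas hw.measurable_mk, ?_, ?_⟩
  · intro x
    by_cases hx : x ∈ N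
    · simp [hx]
    · have : w x = hw.mk w x := not_not.1 fun hne => hx (hN hne)
      simp [hx, this]
  · filter_upwards [hw.ae_eq_mk, measure_eq_zero_iff_ae_notMem.1 hN0] with x heq hx
    simp [hx, heq]

end LayerCake

theorem aemeasurable_of_quasiconcaveOn_univ {E β : Type*} [NormedAddCommGroup E] [NormedSpace ℝ E]
    [FiniteDimensional ℝ E] [MeasurableSpace E] [BorelSpace E] (μ : Measure E) [μ.IsAddHaarMeasure]
    [TopologicalSpace β] [LinearOrder β] [OrderTopology β] [SecondCountableTopology β]
    [MeasurableSpace β] [BorelSpace β] {φ : E → β}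
    (hφ : QuasiconcaveOn ℝ univ φ) : AEMeasurable φ μ := by
  refine NullMeasurable.aemeasurable ?_
  refine measurable_of_Ioi (δ := NullMeasurableSpace E μ) fun c => ?_
  have hconvex : Convex ℝ {x | c < φ x} := by simpa using hφ.convex_gt c
  exact hconvex.nullMeasurableSet μ

section BrunnMinkowskiLine

theorem volume_add_volume_le_volume_add_of_isCompact {K L : Set ℝ} (hK : IsCompact K)
    (hL : IsCompact L) (hK0 : K.Nonempty) (hL0 : L.Nonempty) :
    volume K + volume L ≤ volume (K + L) := by
  obtain ⟨k, hkK, hk⟩ := hK.exists_isGreatest hK0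
  obtain ⟨l, hlL, hl⟩ := hL.exists_isLeast hL0
  have hdisj : AEDisjoint volume (l +ᵥ K) (k +ᵥ L) := by
    refine measure_mono_null (t := {k + l}) ?_ (by simp)
    rintro _ ⟨⟨a, ha, rfl⟩, b, hb, hab⟩
    have hak : a ≤ k := hk ha
    have hlb : l ≤ b := hl hb
    simp only [vadd_eq_add, mem_singleton_iff] at hab ⊢
    linarith
  calc volume K + volume L = volume (l +ᵥ K) + volume (k +ᵥ L) := by simp only [measure_vadd]
    _ = volume ((l +ᵥ K) ∪ (k +ᵥ L)) :=
        (measure_union₀ (hL.vadd k).measurableSet.nullMeasurableSet hdisj).symm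
    _ ≤ volume (K + L) := by
        refine measure_mono (union_subset ?_ ?_)
        · rintro _ ⟨a, ha, rfl⟩
          exact ⟨a, ha, l, hlL, add_comm a l⟩
        · rintro _ ⟨b, hb, rfl⟩
          exact ⟨k, hkK, b, hb, rfl⟩

theorem volume_add_volume_le_volume_add {A B : Set ℝ} (hA : MeasurableSet A)
    (hB : MeasurableSet B) (hA0 : A.Nonempty) (hB0 : B.Nonempty) :
    volume A + volume B ≤ volume (A + B) := by
  obtain ⟨a, ha⟩ := hA0
  obtain ⟨b, hb⟩ := hB0
  rw [hA.measure_eq_iSup_isCompact, hB.measure_eq_iSup_isCompact]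
  simp only [iSup_and']
  refine ENNReal.biSup_add_biSup_le' ⟨∅, by simp⟩ ⟨∅, by simp⟩ ?_
  rintro K ⟨hKA, hK⟩ L ⟨hLB, hL⟩
  calc volume K + volume L ≤ volume (insert a K) + volume (insert b L) := by
        gcongr <;> exact subset_insert _ _
    _ ≤ volume (insert a K + insert b L) :=
        volume_add_volume_le_volume_add_of_isCompact (hK.insert a) (hL.insert b)
          (insert_nonempty a K) (insert_nonempty b L)
    _ ≤ volume (A + B) :=
        measure_mono (add_subset_add (insert_subset ha hKA) (insert_subset hb hLB))

theorem mul_volume_add_mul_volume_le {A B : Set ℝ} (hA : MeasurableSet A) (hB : MeasurableSet B)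
    (hA0 : A.Nonempty) (hB0 : B.Nonempty) {a b : ℝ} (ha : 0 ≤ a) (hb : 0 ≤ b) :
    ENNReal.ofReal a * volume A + ENNReal.ofReal b * volume B ≤ volume (a • A + b • B) := by
  have key := volume_add_volume_le_volume_add (hA.const_smul₀ a) (hB.const_smul₀ b)
    (hA0.smul_set (a := a)) (hB0.smul_set (a := b))
  simpa [Measure.addHaar_smul, abs_of_nonneg ha, abs_of_nonneg hb] using key

end BrunnMinkowskiLine

section PrekopaLeindler

/-- The pointwise hypothesis of the Prékopa–Leindler inequality with weights `1 - l` and `l`. -/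
def IsLeindlerTriple {E : Type*} [AddCommGroup E] [Module ℝ E] (l : ℝ) (u v w : E → ℝ≥0∞) : Prop :=
  ∀ x y, u x ^ (1 - l) * v y ^ l ≤ w ((1 - l) • x + l • y)

/-- The measure `μ` satisfies the Prékopa–Leindler inequality with weights `1 - l` and `l`. Stating
it as a property of `μ` lets it pass to products and to linear images. -/
def PrekopaLeindler {E : Type*} [AddCommGroup E] [Module ℝ E] [MeasurableSpace E] (l : ℝ)
    (μ : Measure E) : Prop :=
  ∀ ⦃u v w : E → ℝ≥0∞⦄, Measurable u → Measurable v → Measurable w → IsLeindlerTriple l u v w →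
    (∫⁻ x, u x ∂μ) ^ (1 - l) * (∫⁻ x, v x ∂μ) ^ l ≤ ∫⁻ x, w x ∂μ

theorem quasiconcaveOn_univ_of_isLeindlerTriple {E : Type*} [AddCommGroup E] [Module ℝ E]
    {u : E → ℝ≥0∞} (hu : ∀ l ∈ Ioo (0 : ℝ) 1, IsLeindlerTriple l u u u) :
    QuasiconcaveOn ℝ univ u := by
  refine quasiconcaveOn_iff_min_le.2 ⟨convex_univ, fun x _ y _ a b ha hb hab => ?_⟩
  obtain rfl : a = 1 - b := eq_sub_of_add_eq hab
  rcases hb.eq_or_lt with rfl | hb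
  · simp
  rcases ha.eq_or_lt with ha | ha
  · obtain rfl : b = 1 := (sub_eq_zero.1 ha.symm).symm
    simp
  have hb' : b ∈ Ioo (0 : ℝ) 1 := ⟨hb, sub_pos.1 ha⟩
  exact (min_le_rpow_mul_rpow hb' _ _).trans (hu b hb' x y)

variable {l : ℝ}

section Line

variable {u v w : ℝ → ℝ≥0∞}

theorem mul_volume_lt_add_mul_volume_lt_le (hl : l ∈ Ioo 0 1) (hu : Measurable u)
    (hv : Measurable v) (hsup : ⨆ x, u x = ⨆ x, v x)
    (h : ∀ x y, min (u x) (v y) ≤ w ((1 - l) • x + l • y)) (c : ℝ≥0∞) :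
    ENNReal.ofReal (1 - l) * volume {x | c < u x} + ENNReal.ofReal l * volume {x | c < v x} ≤
      volume {x | c < w x} := by
  rcases lt_or_ge c (⨆ x, u x) with hc | hc
  · have hcu : {x | c < u x}.Nonempty := lt_iSup_iff.1 hc
    have hcv : {x | c < v x}.Nonempty := lt_iSup_iff.1 (hc.trans_eq hsup)
    refine (mul_volume_add_mul_volume_le (measurableSet_lt measurable_const hu)
      (measurableSet_lt measurable_const hv) hcu hcv (sub_nonneg.2 hl.2.le) hl.1.le).trans
      (measure_mono ?_)
    rintro _ ⟨_, ⟨x, hx, rfl⟩, _, ⟨y, hy, rfl⟩, rfl⟩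
    exact (lt_min hx hy).trans_le (h x y)
  · have hcu : {x | c < u x} = ∅ := eq_empty_of_forall_notMem fun x =>
      not_lt.2 ((le_iSup u x).trans hc)
    have hcv : {x | c < v x} = ∅ := eq_empty_of_forall_notMem fun x =>
      not_lt.2 ((le_iSup v x).trans (hsup ▸ hc))
    simp [hcu, hcv]

theorem mul_lintegral_add_mul_lintegral_le_of_min_le (hl : l ∈ Ioo 0 1) (hu : Measurable u)
    (hv : Measurable v) (hw : Measurable w) (hsup : ⨆ x, u x = ⨆ x, v x)
    (h : ∀ x y, min (u x) (v y) ≤ w ((1 - l) • x + l • y)) :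
    ENNReal.ofReal (1 - l) * (∫⁻ x, u x) + ENNReal.ofReal l * (∫⁻ x, v x) ≤ ∫⁻ x, w x := by
  have hmeas (z : ℝ → ℝ≥0∞) : Measurable fun t : ℝ => volume {x | ENNReal.ofReal t < z x} :=
    Antitone.measurable fun s t hst =>
      measure_mono fun x hx => (ENNReal.ofReal_le_ofReal hst).trans_lt hx
  simp only [lintegral_eq_lintegral_measure_ofReal_lt, hu, hv, hw]
  rw [← lintegral_const_mul _ (hmeas u), ← lintegral_const_mul _ (hmeas v),
    ← lintegral_add_left ((hmeas u).const_mul _)]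
  exact lintegral_mono fun t => mul_volume_lt_add_mul_volume_lt_le hl hu hv hsup h _

/-- Normalising both suprema to `1` makes the superlevel sets of `u` and `v` nonempty at the same
heights, as Brunn–Minkowski requires. -/
theorem rpow_lintegral_mul_rpow_lintegral_le_of_iSup_ne_top (hl : l ∈ Ioo 0 1) (hu : Measurable u)
    (hv : Measurable v) (hw : Measurable w) (hu_top : ⨆ x, u x ≠ ⊤) (hv_top : ⨆ x, v x ≠ ⊤)
    (h : IsLeindlerTriple l u v w) :
    (∫⁻ x, u x) ^ (1 - l) * (∫⁻ x, v x) ^ l ≤ ∫⁻ x, w x := by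
  have h1l : 0 < 1 - l := sub_pos.2 hl.2
  set a := ⨆ x, u x
  set b := ⨆ x, v x
  rcases eq_or_ne a 0 with ha | ha
  · have hu0 : ∀ x, u x = 0 := by simpa [a] using ha
    simp [hu0, h1l]
  rcases eq_or_ne b 0 with hb | hb
  · have hv0 : ∀ x, v x = 0 := by simpa [b] using hb
    simp [hv0, hl.1]
  have hsplit (p q : ℝ≥0∞) : (p / a) ^ (1 - l) * (q / b) ^ l =
      (a⁻¹ ^ (1 - l) * b⁻¹ ^ l) * (p ^ (1 - l) * q ^ l) := by
    simp only [div_eq_mul_inv, ENNReal.mul_rpow_of_nonneg _ _ h1l.le,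
      ENNReal.mul_rpow_of_nonneg _ _ hl.1.le]
    ring
  set κ := a⁻¹ ^ (1 - l) * b⁻¹ ^ l
  have hκ0 : κ ≠ 0 := by simp [κ, hu_top, hv_top, hl.1.le, hl.2.le]
  have hκ : κ ≠ ⊤ := ENNReal.mul_ne_top (by simp [ha, hl.2.le]) (by simp [hb, hl.1.le])
  have hsup : ⨆ x, u x / a = ⨆ x, v x / b := by
    rw [← ENNReal.iSup_div, ← ENNReal.iSup_div, ENNReal.div_self ha hu_top,
      ENNReal.div_self hb hv_top]
  refine (ENNReal.mul_le_mul_iff_right hκ0 hκ).1 ?_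
  calc κ * ((∫⁻ x, u x) ^ (1 - l) * (∫⁻ x, v x) ^ l)
      = (∫⁻ x, u x / a) ^ (1 - l) * (∫⁻ x, v x / b) ^ l := by
        simp only [← hsplit, div_eq_mul_inv, lintegral_mul_const _ hu, lintegral_mul_const _ hv]
    _ ≤ ENNReal.ofReal (1 - l) * (∫⁻ x, u x / a) + ENNReal.ofReal l * (∫⁻ x, v x / b) :=
        rpow_mul_rpow_le_mul_add_mul hl _ _
    _ ≤ ∫⁻ x, κ * w x := by
        refine mul_lintegral_add_mul_lintegral_le_of_min_le hl (hu.div_const a) (hv.div_const b)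
          (hw.const_mul κ) hsup fun x y => (min_le_rpow_mul_rpow hl _ _).trans ?_
        rw [hsplit]
        exact mul_le_mul_right (h x y) κ
    _ = κ * ∫⁻ x, w x := lintegral_const_mul κ hw

theorem prekopaLeindler_volume_real (hl : l ∈ Ioo 0 1) :
    PrekopaLeindler l (volume : Measure ℝ) := by
  intro u v w hu hv hw h
  have h1l : 0 < 1 - l := sub_pos.2 hl.2
  rcases eq_or_ne (∫⁻ x, u x) 0 with hu0 | hu0
  · simp [hu0, h1l]
  rcases eq_or_ne (∫⁻ x, v x) 0 with hv0 | hv0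
  · simp [hv0, hl.1]
  have htrunc : Tendsto
      (fun k : ℕ => (∫⁻ x, min (u x) k) ^ (1 - l) * (∫⁻ x, min (v x) k) ^ l) atTop
      (𝓝 ((∫⁻ x, u x) ^ (1 - l) * (∫⁻ x, v x) ^ l)) :=
    ENNReal.Tendsto.mul ((tendsto_lintegral_min_natCast hu).ennrpow_const _)
      (.inl (by simp [hu0, h1l, h1l.not_gt])) ((tendsto_lintegral_min_natCast hv).ennrpow_const _)
      (.inl (by simp [hv0, hl.1, hl.1.not_gt]))
  have hbdd (z : ℝ → ℝ≥0∞) (k : ℕ) : ⨆ x, min (z x) k ≠ ⊤ :=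
    ne_top_of_le_ne_top (ENNReal.natCast_ne_top k) (iSup_le fun x => min_le_right _ _)
  refine le_of_tendsto' htrunc fun k => rpow_lintegral_mul_rpow_lintegral_le_of_iSup_ne_top hl
    (by fun_prop) (by fun_prop) hw (hbdd u k) (hbdd v k) fun x y => le_trans ?_ (h x y)
  exact mul_le_mul' (ENNReal.rpow_le_rpow (min_le_left _ _) h1l.le)
    (ENNReal.rpow_le_rpow (min_le_left _ _) hl.1.le)

end Line

variable {E F : Type*} [AddCommGroup E] [Module ℝ E] [MeasurableSpace E] {μ : Measure E}
  [AddCommGroup F] [Module ℝ F] [MeasurableSpace F] {ν : Measure F}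

theorem PrekopaLeindler.prod [SFinite ν] (hμ : PrekopaLeindler l μ) (hν : PrekopaLeindler l ν) :
    PrekopaLeindler l (μ.prod ν) := by
  intro u v w hu hv hw h
  rw [lintegral_prod _ hu.aemeasurable, lintegral_prod _ hv.aemeasurable,
    lintegral_prod _ hw.aemeasurable]
  exact hμ hu.lintegral_prod_right' hv.lintegral_prod_right' hw.lintegral_prod_right' fun a b =>
    hν (hu.comp measurable_prodMk_left) (hv.comp measurable_prodMk_left)
      (hw.comp measurable_prodMk_left) fun x y => h (a, x) (b, y)

theorem PrekopaLeindler.of_measurePreserving (hμ : PrekopaLeindler l μ) (e : E →ₗ[ℝ] F)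
    (he : MeasurePreserving e μ ν) : PrekopaLeindler l ν := by
  intro u v w hu hv hw h
  rw [← he.lintegral_comp hu, ← he.lintegral_comp hv, ← he.lintegral_comp hw]
  refine hμ (hu.comp he.measurable) (hv.comp he.measurable) (hw.comp he.measurable) fun x y => ?_
  simpa using h (e x) (e y)

theorem prekopaLeindler_dirac_zero : PrekopaLeindler l (Measure.dirac (0 : E)) := by
  intro u v w hu hv hw h
  simpa [lintegral_dirac' _ hu, lintegral_dirac' _ hv, lintegral_dirac' _ hw] using h 0 0

theorem prekopaLeindler_volume_pi (hl : l ∈ Ioo 0 1) (n : ℕ) :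
    PrekopaLeindler l (volume : Measure (Fin n → ℝ)) := by
  induction n with
  | zero =>
    rw [volume_pi, Measure.pi_of_empty _ 0]
    exact prekopaLeindler_dirac_zero
  | succ n ih =>
    have hcons : ⇑(Fin.consLinearEquiv ℝ fun _ : Fin (n + 1) => ℝ).toLinearMap =
        (MeasurableEquiv.piFinSuccAbove (fun _ => ℝ) 0).symm := by
      ext p : 1
      exact (Fin.insertNth_zero' p.1 p.2).symm
    refine ((prekopaLeindler_volume_real hl).prod ih).of_measurePreserving
      (Fin.consLinearEquiv ℝ fun _ => ℝ).toLinearMap ?_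
    rw [hcons]
    exact (volume_preserving_piFinSuccAbove (fun _ => ℝ) 0).symm

theorem prekopaLeindler_volume_euclideanSpace (hl : l ∈ Ioo 0 1) (n : ℕ) :
    PrekopaLeindler l (volume : Measure (EuclideanSpace ℝ (Fin n))) :=
  (prekopaLeindler_volume_pi hl n).of_measurePreserving
    (WithLp.linearEquiv 2 ℝ (Fin n → ℝ)).symm.toLinearMap (PiLp.volume_preserving_toLp (Fin n))

theorem PrekopaLeindler.rpow_lintegral_mul_rpow_lintegral_le (hμ : PrekopaLeindler l μ)
    (hl : l ∈ Ioo 0 1) {u v w : E → ℝ≥0∞} (hw : AEMeasurable w μ)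
    (h : IsLeindlerTriple l u v w) :
    (∫⁻ x, u x ∂μ) ^ (1 - l) * (∫⁻ x, v x ∂μ) ^ l ≤ ∫⁻ x, w x ∂μ := by
  obtain ⟨u', hu', hu'_le, hu'_int⟩ := exists_measurable_le_lintegral_eq μ u
  obtain ⟨v', hv', hv'_le, hv'_int⟩ := exists_measurable_le_lintegral_eq μ v
  obtain ⟨w', hw', hw_le, hww'⟩ := exists_measurable_ge_ae_eq hw
  rw [hu'_int, hv'_int, lintegral_congr_ae hww']
  refine hμ hu' hv' hw' fun x y => ?_
  calc u' x ^ (1 - l) * v' y ^ l ≤ u x ^ (1 - l) * v y ^ l :=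
        mul_le_mul' (ENNReal.rpow_le_rpow (hu'_le x) (sub_nonneg.2 hl.2.le))
          (ENNReal.rpow_le_rpow (hv'_le y) hl.1.le)
    _ ≤ w ((1 - l) • x + l • y) := h x y
    _ ≤ w' ((1 - l) • x + l • y) := hw_le _

end PrekopaLeindler

section LogConcave

variable {n : ℕ} {f g : Euc n → ℝ} {l : ℝ}

theorem LogConcaveFn.isLeindlerTriple (hf : LogConcaveFn f) (hf0 : 0 ≤ f) (hl : l ∈ Ioo 0 1) :
    IsLeindlerTriple l (fun x => ENNReal.ofReal (f x)) (fun x => ENNReal.ofReal (f x))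
      (fun x => ENNReal.ofReal (f x)) := by
  intro x y
  rw [ENNReal.ofReal_rpow_of_nonneg (hf0 x) (sub_nonneg.2 hl.2.le),
    ENNReal.ofReal_rpow_of_nonneg (hf0 y) hl.1.le,
    ← ENNReal.ofReal_mul (Real.rpow_nonneg (hf0 x) _)]
  exact ENNReal.ofReal_le_ofReal (hf x y l hl.1.le hl.2.le)

theorem logConcaveFn_of_tendsto {ι : Type*} {F : Filter ι} [F.NeBot] {G : ι → Euc n → ℝ}
    (hG : ∀ i, LogConcaveFn (G i)) (hlim : ∀ x, Tendsto (fun i => G i x) F (𝓝 (g x))) :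
    LogConcaveFn g := by
  intro x y l hl0 hl1
  have hrpow {p : ℝ} (hp : 0 ≤ p) (z : Euc n) : Tendsto (fun i => G i z ^ p) F (𝓝 (g z ^ p)) :=
    (hlim z).rpow_const (.inr hp)
  exact le_of_tendsto_of_tendsto' ((hrpow (sub_nonneg.2 hl1) x).mul (hrpow hl0 y)) (hlim _)
    fun i => hG i x y l hl0 hl1

theorem LogConcaveFn.indicator (hg : LogConcaveFn g) (hg0 : 0 ≤ g) {s : Set (Euc n)}
    (hs : Convex ℝ s) : LogConcaveFn (s.indicator g) := by
  intro x y l hl0 hl1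
  have hind0 : 0 ≤ s.indicator g ((1 - l) • x + l • y) := indicator_nonneg (fun z _ => hg0 z) _
  rcases hl0.eq_or_lt with rfl | hl0'
  · simp
  rcases hl1.eq_or_lt with rfl | hl1'
  · simp
  by_cases hx : x ∈ s
  · by_cases hy : y ∈ s
    · have hxy : (1 - l) • x + l • y ∈ s := hs hx hy (sub_nonneg.2 hl1) hl0 (sub_add_cancel 1 l)
      simpa only [indicator_of_mem, hx, hy, hxy] using hg x y l hl0 hl1
    · rwa [indicator_of_notMem hy, Real.zero_rpow hl0'.ne', mul_zero]
  · rwa [indicator_of_notMem hx, Real.zero_rpow (sub_pos.2 hl1').ne', zero_mul]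

end LogConcave

section Dilation

variable {n : ℕ} {g h : Euc n → ℝ} {l t : ℝ}

theorem dil_nonneg (hg0 : 0 ≤ g) (t : ℝ) : 0 ≤ dil t g :=
  fun _ => Real.rpow_nonneg (hg0 _) t

theorem dil_mono (hg0 : 0 ≤ g) (hgh : g ≤ h) (ht : 0 ≤ t) : dil t g ≤ dil t h :=
  fun _ => Real.rpow_le_rpow (hg0 _) (hgh _) ht

theorem dil_rpow (hg0 : 0 ≤ g) (hl : l ≠ 0) (t : ℝ) (x : Euc n) :
    dil t g x ^ l = dil (l * t) g (l • x) := by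
  have hscale : (l * t)⁻¹ • l • x = t⁻¹ • x := by
    rw [smul_smul, mul_inv, mul_right_comm, inv_mul_cancel₀ hl, one_mul]
  rw [dil, dil, hscale, ← Real.rpow_mul (hg0 _), mul_comm]

theorem logConcaveFn_dil (hg : LogConcaveFn g) (hg0 : 0 ≤ g) (ht : 0 ≤ t) :
    LogConcaveFn (dil t g) := by
  intro x y l hl0 hl1
  have hcomb : (1 - l) • t⁻¹ • x + l • t⁻¹ • y = t⁻¹ • ((1 - l) • x + l • y) := by
    rw [smul_add, smul_comm t⁻¹, smul_comm t⁻¹]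
  have hrpow0 (z : Euc n) (p : ℝ) : 0 ≤ g z ^ p := Real.rpow_nonneg (hg0 z) p
  calc dil t g x ^ (1 - l) * dil t g y ^ l
      = (g (t⁻¹ • x) ^ (1 - l) * g (t⁻¹ • y) ^ l) ^ t := by
        rw [Real.mul_rpow (hrpow0 _ _) (hrpow0 _ _), dil, dil]
        simp only [← Real.rpow_mul (hg0 _), mul_comm t]
    _ ≤ g ((1 - l) • t⁻¹ • x + l • t⁻¹ • y) ^ t :=
        Real.rpow_le_rpow (mul_nonneg (hrpow0 _ _) (hrpow0 _ _)) (hg _ _ l hl0 hl1) ht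
    _ = dil t g ((1 - l) • x + l • y) := by rw [hcomb, dil]

/-- The indicator of `{0}` plays the role of the dilation `0 · g`. -/
theorem isLeindlerTriple_indicator_dil (hg0 : 0 ≤ g) (hl : l ∈ Ioo 0 1) (t : ℝ) :
    IsLeindlerTriple l (fun x => ENNReal.ofReal (({0} : Set (Euc n)).indicator 1 x))
      (fun x => ENNReal.ofReal (dil t g x)) (fun x => ENNReal.ofReal (dil (l * t) g x)) := by
  intro x y
  rcases eq_or_ne x 0 with rfl | hx
  · simp [ENNReal.ofReal_rpow_of_nonneg (dil_nonneg hg0 t y) hl.1.le, dil_rpow hg0 hl.1.ne']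
  · simp [hx, hl.2]

end Dilation

section SupConvolution

variable {n : ℕ} {f g h : Euc n → ℝ} {l : ℝ}

theorem supConv_eq_iSup_mul (hf0 : 0 ≤ f) (g : Euc n → ℝ) (x : Euc n) :
    supConv f g x = ⨆ y, ENNReal.ofReal (f y) * ENNReal.ofReal (g (x - y)) :=
  iSup_congr fun y => ENNReal.ofReal_mul (hf0 y)

theorem supConv_mono (hf0 : 0 ≤ f) (hgh : g ≤ h) : supConv f g ≤ supConv f h :=
  fun _ => iSup_mono fun y => ENNReal.ofReal_le_ofReal (mul_le_mul_of_nonneg_left (hgh _) (hf0 y))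

theorem supConv_indicator_zero (hf0 : 0 ≤ f) (x : Euc n) :
    supConv f (({0} : Set (Euc n)).indicator 1) x = ENNReal.ofReal (f x) := by
  refine le_antisymm (iSup_le fun y => ENNReal.ofReal_le_ofReal ?_) ?_
  · rcases eq_or_ne x y with rfl | hxy
    · simp
    · simpa [sub_ne_zero.2 hxy] using hf0 x
  · refine le_iSup_of_le x ?_
    simp

theorem isLeindlerTriple_supConv {f₁ f₂ f₃ g₁ g₂ g₃ : Euc n → ℝ} (hl : l ∈ Ioo 0 1)
    (hf₁ : 0 ≤ f₁) (hf₂ : 0 ≤ f₂) (hf₃ : 0 ≤ f₃)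
    (hf : IsLeindlerTriple l (fun x => ENNReal.ofReal (f₁ x)) (fun x => ENNReal.ofReal (f₂ x))
      (fun x => ENNReal.ofReal (f₃ x)))
    (hg : IsLeindlerTriple l (fun x => ENNReal.ofReal (g₁ x)) (fun x => ENNReal.ofReal (g₂ x))
      (fun x => ENNReal.ofReal (g₃ x))) :
    IsLeindlerTriple l (supConv f₁ g₁) (supConv f₂ g₂) (supConv f₃ g₃) := by
  intro x y
  simp only [supConv_eq_iSup_mul hf₁, supConv_eq_iSup_mul hf₂, supConv_eq_iSup_mul hf₃]
  rw [iSup_ennreal_rpow (sub_pos.2 hl.2), iSup_ennreal_rpow hl.1]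
  simp only [ENNReal.iSup_mul, ENNReal.mul_iSup]
  refine iSup₂_le fun y' x' => ?_
  have hsub : (1 - l) • (x - x') + l • (y - y') =
      (1 - l) • x + l • y - ((1 - l) • x' + l • y') := by
    rw [smul_sub, smul_sub]
    abel
  refine le_iSup_of_le ((1 - l) • x' + l • y') ?_
  rw [ENNReal.mul_rpow_of_nonneg _ _ (sub_nonneg.2 hl.2.le), ENNReal.mul_rpow_of_nonneg _ _ hl.1.le,
    mul_mul_mul_comm, ← hsub]
  exact mul_le_mul' (hf x' y') (hg (x - x') (y - y'))

theorem aemeasurable_supConv (hf : LogConcaveFn f) (hf0 : 0 ≤ f) (hg : LogConcaveFn g)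
    (hg0 : 0 ≤ g) : AEMeasurable (supConv f g) :=
  aemeasurable_of_quasiconcaveOn_univ volume <| quasiconcaveOn_univ_of_isLeindlerTriple
    fun _ hl => isLeindlerTriple_supConv hl hf0 hf0 hf0 (hf.isLeindlerTriple hf0 hl)
      (hg.isLeindlerTriple hg0 hl)

theorem supConv_eq_iSup_of_tendsto {ι : Type*} [Nonempty ι] [SemilatticeSup ι] (hf0 : 0 ≤ f)
    {G : ι → Euc n → ℝ} (hG : Monotone G) (hlim : ∀ x, Tendsto (fun i => G i x) atTop (𝓝 (g x)))
    (x : Euc n) : supConv f g x = ⨆ i, supConv f (G i) x := by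
  simp only [supConv]
  rw [iSup_comm]
  refine iSup_congr fun y => (iSup_eq_of_tendsto (fun i j hij => ?_) ?_).symm
  · exact ENNReal.ofReal_le_ofReal (mul_le_mul_of_nonneg_left (hG hij _) (hf0 y))
  · exact ENNReal.tendsto_ofReal ((hlim (x - y)).const_mul (f y))

end SupConvolution

section ConvMass

variable {n : ℕ} {f g h : Euc n → ℝ} {l t : ℝ}

/-- The mass `∫ f⋆(t·g)`, whose right derivative at `t = 0` is the first variation. -/
def convMass (f g : Euc n → ℝ) (t : ℝ) : ℝ≥0∞ := ∫⁻ x, supConv f (dil t g) x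

theorem convMass_mono (hf0 : 0 ≤ f) (hg0 : 0 ≤ g) (hgh : g ≤ h) (ht : 0 ≤ t) :
    convMass f g t ≤ convMass f h t :=
  lintegral_mono (supConv_mono hf0 (dil_mono hg0 hgh ht))

theorem totalMass_rpow_mul_convMass_rpow_le (hf : LogConcaveFn f) (hf0 : 0 ≤ f)
    (hg : LogConcaveFn g) (hg0 : 0 ≤ g) (hl : l ∈ Ioo 0 1) (ht : 0 ≤ t) :
    totalMass f ^ (1 - l) * convMass f g t ^ l ≤ convMass f g (l * t) := by
  have htriple := isLeindlerTriple_supConv hl hf0 hf0 hf0 (hf.isLeindlerTriple hf0 hl)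
    (isLeindlerTriple_indicator_dil hg0 hl t)
  have hmeas : AEMeasurable (supConv f (dil (l * t) g)) := aemeasurable_supConv hf hf0
    (logConcaveFn_dil hg hg0 (mul_nonneg hl.1.le ht)) (dil_nonneg hg0 _)
  simpa only [supConv_indicator_zero hf0, totalMass, convMass] using
    (prekopaLeindler_volume_euclideanSpace hl n).rpow_lintegral_mul_rpow_lintegral_le hl hmeas
      htriple

theorem convMass_eq_iSup_of_tendsto (hf : LogConcaveFn f) (hf0 : 0 ≤ f) {G : ℕ → Euc n → ℝ}
    (hG : Monotone G) (hGlc : ∀ m, LogConcaveFn (G m)) (hG0 : ∀ m, 0 ≤ G m)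
    (hlim : ∀ x, Tendsto (fun m => G m x) atTop (𝓝 (g x))) (ht : 0 ≤ t) :
    convMass f g t = ⨆ m, convMass f (G m) t := by
  have hdil : Monotone fun m => dil t (G m) := fun i j hij => dil_mono (hG0 i) (hG hij) ht
  have hdil_lim (x : Euc n) : Tendsto (fun m => dil t (G m) x) atTop (𝓝 (dil t g x)) :=
    (hlim _).rpow_const (.inr ht)
  calc convMass f g t = ∫⁻ x, ⨆ m, supConv f (dil t (G m)) x :=
        lintegral_congr (supConv_eq_iSup_of_tendsto hf0 hdil hdil_lim)
    _ = ⨆ m, convMass f (G m) t := lintegral_iSup'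
        (fun m => aemeasurable_supConv hf hf0 (logConcaveFn_dil (hGlc m) (hG0 m) ht)
          (dil_nonneg (hG0 m) t))
        (.of_forall fun x i j hij => supConv_mono hf0 (hdil hij) x)

end ConvMass

section MassRate

variable {n : ℕ} {f g h : Euc n → ℝ} {t : ℝ}

/-- The rate `(∫ f⋆(t·g) / ∫ f)^(1/t)` of exponential growth of the mass between times `0` and
`t`. -/
def massRate (f g : Euc n → ℝ) (t : ℝ) : ℝ≥0∞ := (convMass f g t / totalMass f) ^ t⁻¹

theorem massRate_rpow (f g : Euc n → ℝ) (ht : t ≠ 0) :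
    massRate f g t ^ t = convMass f g t / totalMass f := by
  rw [massRate, ← ENNReal.rpow_mul, inv_mul_cancel₀ ht, ENNReal.rpow_one]

theorem massRate_mono (hf0 : 0 ≤ f) (hg0 : 0 ≤ g) (hgh : g ≤ h) (ht : 0 ≤ t) :
    massRate f g t ≤ massRate f h t :=
  ENNReal.rpow_le_rpow (ENNReal.div_le_div_right (convMass_mono hf0 hg0 hgh ht) _)
    (inv_nonneg.2 ht)

theorem antitoneOn_massRate (hf : LogConcaveFn f) (hf0 : 0 ≤ f) (hpos : totalMass f ≠ 0)
    (hfin : totalMass f ≠ ⊤) (hg : LogConcaveFn g) (hg0 : 0 ≤ g) :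
    AntitoneOn (massRate f g) (Ioi 0) := by
  intro s hs t ht hst
  rcases hst.eq_or_lt with rfl | hst
  · exact le_rfl
  have hs : 0 < s := hs
  have ht : 0 < t := ht
  have hl : s / t ∈ Ioo 0 1 := ⟨by positivity, (div_lt_one ht).2 hst⟩
  have hinterp := totalMass_rpow_mul_convMass_rpow_le hf hf0 hg hg0 hl ht.le
  rw [div_mul_cancel₀ _ ht.ne'] at hinterp
  calc massRate f g t = ((convMass f g t / totalMass f) ^ (s / t)) ^ s⁻¹ := by
        rw [massRate, ← ENNReal.rpow_mul, div_mul_eq_mul_div, mul_inv_cancel₀ hs.ne', one_div]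
    _ ≤ massRate f g s := ENNReal.rpow_le_rpow
        (div_rpow_le_div_of_rpow_mul_rpow_le hl.1.le hpos hfin hinterp) (inv_nonneg.2 hs.le)

theorem massRate_eq_iSup_of_tendsto (hf : LogConcaveFn f) (hf0 : 0 ≤ f) {G : ℕ → Euc n → ℝ}
    (hG : Monotone G) (hGlc : ∀ m, LogConcaveFn (G m)) (hG0 : ∀ m, 0 ≤ G m)
    (hlim : ∀ x, Tendsto (fun m => G m x) atTop (𝓝 (g x))) (ht : 0 < t) :
    massRate f g t = ⨆ m, massRate f (G m) t := by
  simp only [massRate]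
  rw [convMass_eq_iSup_of_tendsto hf hf0 hG hGlc hG0 hlim ht.le, ENNReal.iSup_div,
    iSup_ennreal_rpow (inv_pos.2 ht)]

/-- The supremum of the growth rates over all `t > 0`, which is also their limit as `t → 0⁺`. -/
def massRateSup (f g : Euc n → ℝ) : ℝ≥0∞ := ⨆ t : Ioi (0 : ℝ), massRate f g t

theorem massRate_le_massRateSup (f g : Euc n → ℝ) (ht : 0 < t) :
    massRate f g t ≤ massRateSup f g :=
  le_iSup (fun t : Ioi (0 : ℝ) => massRate f g t) ⟨t, ht⟩

theorem massRateSup_mono (hf0 : 0 ≤ f) (hg0 : 0 ≤ g) (hgh : g ≤ h) :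
    massRateSup f g ≤ massRateSup f h :=
  iSup_mono fun t => massRate_mono hf0 hg0 hgh (le_of_lt t.2)

theorem tendsto_massRate (hf : LogConcaveFn f) (hf0 : 0 ≤ f) (hpos : totalMass f ≠ 0)
    (hfin : totalMass f ≠ ⊤) (hg : LogConcaveFn g) (hg0 : 0 ≤ g) :
    Tendsto (massRate f g) (𝓝[>] 0) (𝓝 (massRateSup f g)) := by
  rw [massRateSup, ← sSup_image']
  exact (antitoneOn_massRate hf hf0 hpos hfin hg hg0).tendsto_nhdsGT (OrderTop.bddAbove _)

theorem tendsto_massRateSup (hf : LogConcaveFn f) (hf0 : 0 ≤ f) {G : ℕ → Euc n → ℝ}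
    (hG : Monotone G) (hGlc : ∀ m, LogConcaveFn (G m)) (hG0 : ∀ m, 0 ≤ G m)
    (hlim : ∀ x, Tendsto (fun m => G m x) atTop (𝓝 (g x))) :
    Tendsto (fun m => massRateSup f (G m)) atTop (𝓝 (massRateSup f g)) := by
  have hsup : massRateSup f g = ⨆ m, massRateSup f (G m) := by
    simp only [massRateSup]
    rw [iSup_comm]
    exact iSup_congr fun t => massRate_eq_iSup_of_tendsto hf hf0 hG hGlc hG0 hlim t.2
  rw [hsup]
  exact tendsto_atTop_iSup fun i j hij => massRateSup_mono hf0 (hG0 i) (hG hij)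

end MassRate

section BoxCox

variable {a t : ℝ}

/-- The Box–Cox transform `(a^t - 1) / t` on `[0, ∞]`, which approximates `log a` from above as
`t → 0⁺`. -/
def boxCox (a : ℝ≥0∞) (t : ℝ) : EReal := ((t⁻¹ : ℝ) : EReal) * (((a ^ t : ℝ≥0∞) : EReal) - 1)

theorem boxCox_top (ht : 0 < t) : boxCox ⊤ t = ⊤ := by
  rw [boxCox, ENNReal.top_rpow_of_pos ht, EReal.coe_ennreal_top, ← EReal.coe_one,
    EReal.top_sub_coe, EReal.coe_mul_top_of_pos (inv_pos.2 ht)]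

theorem boxCox_ofReal (ha : 0 ≤ a) (ht : 0 ≤ t) :
    boxCox (ENNReal.ofReal a) t = ((t⁻¹ * (a ^ t - 1) : ℝ) : EReal) := by
  rw [boxCox, ENNReal.ofReal_rpow_of_nonneg ha ht, EReal.coe_ennreal_ofReal,
    max_eq_left (Real.rpow_nonneg ha t)]
  norm_cast

theorem boxCox_monotone (ht : 0 ≤ t) : Monotone fun a => boxCox a t := fun _ _ hab =>
  mul_le_mul_of_nonneg_left
    (EReal.sub_le_sub (EReal.coe_ennreal_le_coe_ennreal_iff.2 (ENNReal.rpow_le_rpow hab ht)) le_rfl)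
    (EReal.coe_nonneg.2 (inv_nonneg.2 ht))

theorem log_le_boxCox (a : ℝ≥0∞) (ht : 0 < t) : ENNReal.log a ≤ boxCox a t := by
  rcases eq_or_ne a ⊤ with rfl | ha
  · rw [boxCox_top ht]
    exact le_top
  rcases eq_or_ne a 0 with rfl | ha0
  · rw [ENNReal.log_zero]
    exact bot_le
  have hapos : 0 < a.toReal := ENNReal.toReal_pos ha0 ha
  rw [← ENNReal.ofReal_toReal ha, boxCox_ofReal hapos.le ht.le, ENNReal.log_ofReal_of_pos hapos,
    EReal.coe_le_coe_iff, inv_mul_eq_div, le_div_iff₀' ht, ← Real.log_rpow hapos]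
  exact Real.log_le_sub_one_of_pos (Real.rpow_pos_of_pos hapos t)

theorem tendsto_inv_mul_rpow_sub_one (ha : 0 < a) :
    Tendsto (fun t : ℝ => t⁻¹ * (a ^ t - 1)) (𝓝[>] 0) (𝓝 (Real.log a)) := by
  have hderiv : HasDerivAt (fun t : ℝ => a ^ t) (Real.log a) 0 := by
    simpa using (Real.hasStrictDerivAt_const_rpow ha 0).hasDerivAt
  simpa using hderiv.tendsto_slope_zero_right

theorem tendsto_boxCox_const (a : ℝ≥0∞) : Tendsto (boxCox a) (𝓝[>] 0) (𝓝 (ENNReal.log a)) := by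
  rcases eq_or_ne a ⊤ with rfl | ha
  · refine tendsto_const_nhds.congr' ?_
    filter_upwards [self_mem_nhdsWithin] with t ht
    rw [boxCox_top ht, ENNReal.log_top]
  have hreal : (fun t : ℝ => ((t⁻¹ * (a.toReal ^ t - 1) : ℝ) : EReal)) =ᶠ[𝓝[>] 0] boxCox a := by
    filter_upwards [self_mem_nhdsWithin] with t ht
    rw [← boxCox_ofReal ENNReal.toReal_nonneg (le_of_lt ht), ENNReal.ofReal_toReal ha]
  refine Tendsto.congr' hreal ?_
  rcases eq_or_ne a 0 with rfl | ha0
  · rw [ENNReal.log_zero, EReal.tendsto_coe_nhds_bot_iff]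
    refine (tendsto_neg_atTop_atBot.comp tendsto_inv_nhdsGT_zero).congr' ?_
    filter_upwards [self_mem_nhdsWithin] with t ht
    simp [Real.zero_rpow (ne_of_gt ht)]
  · rw [← ENNReal.ofReal_toReal ha, ENNReal.log_ofReal_of_pos (ENNReal.toReal_pos ha0 ha),
      ENNReal.ofReal_toReal ha]
    exact (continuous_coe_real_ereal.tendsto _).comp
      (tendsto_inv_mul_rpow_sub_one (ENNReal.toReal_pos ha0 ha))

theorem tendsto_boxCox {α : ℝ → ℝ≥0∞} {A : ℝ≥0∞} (hα : Tendsto α (𝓝[>] 0) (𝓝 A))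
    (hle : ∀ t, 0 < t → α t ≤ A) :
    Tendsto (fun t => boxCox (α t) t) (𝓝[>] 0) (𝓝 (ENNReal.log A)) := by
  refine tendsto_of_tendsto_of_tendsto_of_le_of_le' ((ENNReal.continuous_log.tendsto A).comp hα)
    (tendsto_boxCox_const A) ?_ ?_
  · filter_upwards [self_mem_nhdsWithin] with t ht using log_le_boxCox (α t) ht
  · filter_upwards [self_mem_nhdsWithin] with t ht using boxCox_monotone (le_of_lt ht) (hle t ht)

theorem coe_toReal_mul_coe_div_sub_one {M : ℝ≥0∞} (hM0 : M ≠ 0) (hM : M ≠ ⊤) (c : ℝ≥0∞) :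
    (M.toReal : EReal) * (((c / M : ℝ≥0∞) : EReal) - 1) = (c : EReal) - M := by
  lift M to ℝ≥0 using hM
  have hM0 : 0 < (M : ℝ) := NNReal.coe_pos.2 (pos_iff_ne_zero.2 (by simpa using hM0))
  induction c with
  | top =>
    rw [ENNReal.top_div_coe, EReal.coe_ennreal_top, ← EReal.coe_one, EReal.top_sub_coe,
      ENNReal.coe_toReal, EReal.coe_mul_top_of_pos hM0, EReal.coe_nnreal_eq_coe_real,
      EReal.top_sub_coe]
  | coe c =>
    have hreal : (M : ℝ) * (c / M - 1) = c - M := by field_simp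
    rw [← ENNReal.coe_div (by simpa using hM0.ne')]
    simp only [ENNReal.coe_toReal, EReal.coe_nnreal_eq_coe_real]
    exact_mod_cast hreal

end BoxCox

section FirstVariation

variable {n : ℕ} {f g h : Euc n → ℝ} {t : ℝ}

/-- The first variation `δ(f, g)`, the limit of the difference quotients as `t → 0⁺`. It is a
junk value when the limit does not exist. -/
def firstVariation (f g : Euc n → ℝ) : EReal := limUnder (𝓝[>] 0) (deltaQuot f g)

theorem deltaQuot_eq_mul_boxCox (hpos : totalMass f ≠ 0) (hfin : totalMass f ≠ ⊤)
    (g : Euc n → ℝ) (ht : t ≠ 0) :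
    deltaQuot f g t = (totalMass f).toReal * boxCox (massRate f g t) t := by
  rw [boxCox, massRate_rpow f g ht, mul_left_comm, coe_toReal_mul_coe_div_sub_one hpos hfin]
  rfl

theorem tendsto_deltaQuot (hf : LogConcaveFn f) (hf0 : 0 ≤ f) (hpos : totalMass f ≠ 0)
    (hfin : totalMass f ≠ ⊤) (hg : LogConcaveFn g) (hg0 : 0 ≤ g) :
    Tendsto (deltaQuot f g) (𝓝[>] 0)
      (𝓝 ((totalMass f).toReal * ENNReal.log (massRateSup f g))) := by
  have hlog := tendsto_boxCox (tendsto_massRate hf hf0 hpos hfin hg hg0)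
    fun _ => massRate_le_massRateSup f g
  refine (EReal.Tendsto.const_mul hlog (.inl (EReal.coe_ne_bot _))
    (.inl (EReal.coe_ne_top _))).congr' ?_
  filter_upwards [self_mem_nhdsWithin] with t ht
  exact (deltaQuot_eq_mul_boxCox hpos hfin g (ne_of_gt ht)).symm

theorem firstVariation_eq (hf : LogConcaveFn f) (hf0 : 0 ≤ f) (hpos : totalMass f ≠ 0)
    (hfin : totalMass f ≠ ⊤) (hg : LogConcaveFn g) (hg0 : 0 ≤ g) :
    firstVariation f g = (totalMass f).toReal * ENNReal.log (massRateSup f g) :=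
  (tendsto_deltaQuot hf hf0 hpos hfin hg hg0).limUnder_eq

theorem tendsto_deltaQuot_firstVariation (hf : LogConcaveFn f) (hf0 : 0 ≤ f)
    (hpos : totalMass f ≠ 0) (hfin : totalMass f ≠ ⊤) (hg : LogConcaveFn g) (hg0 : 0 ≤ g) :
    Tendsto (deltaQuot f g) (𝓝[>] 0) (𝓝 (firstVariation f g)) :=
  tendsto_nhds_limUnder ⟨_, tendsto_deltaQuot hf hf0 hpos hfin hg hg0⟩

theorem firstVariation_mono (hf : LogConcaveFn f) (hf0 : 0 ≤ f) (hpos : totalMass f ≠ 0)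
    (hfin : totalMass f ≠ ⊤) (hg : LogConcaveFn g) (hg0 : 0 ≤ g) (hh : LogConcaveFn h)
    (hgh : g ≤ h) : firstVariation f g ≤ firstVariation f h := by
  rw [firstVariation_eq hf hf0 hpos hfin hg hg0,
    firstVariation_eq hf hf0 hpos hfin hh (hg0.trans hgh)]
  exact mul_le_mul_of_nonneg_left (ENNReal.log_monotone (massRateSup_mono hf0 hg0 hgh))
    (EReal.coe_nonneg.2 ENNReal.toReal_nonneg)

theorem tendsto_firstVariation (hf : LogConcaveFn f) (hf0 : 0 ≤ f) (hpos : totalMass f ≠ 0)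
    (hfin : totalMass f ≠ ⊤) {G : ℕ → Euc n → ℝ} (hG : Monotone G)
    (hGlc : ∀ m, LogConcaveFn (G m)) (hG0 : ∀ m, 0 ≤ G m)
    (hlim : ∀ x, Tendsto (fun m => G m x) atTop (𝓝 (g x))) :
    Tendsto (fun m => firstVariation f (G m)) atTop (𝓝 (firstVariation f g)) := by
  have hg : LogConcaveFn g := logConcaveFn_of_tendsto hGlc hlim
  have hg0 : 0 ≤ g := fun x => ge_of_tendsto' (hlim x) fun m => hG0 m x
  rw [firstVariation_eq hf hf0 hpos hfin hg hg0]
  simp only [fun m => firstVariation_eq hf hf0 hpos hfin (hGlc m) (hG0 m)]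
  have hlog := (ENNReal.continuous_log.tendsto _).comp
    (tendsto_massRateSup hf hf0 hG hGlc hG0 hlim)
  exact EReal.Tendsto.const_mul hlog (.inl (EReal.coe_ne_bot _)) (.inl (EReal.coe_ne_top _))

end FirstVariation

section Truncation

variable {E β : Type*} [SeminormedAddCommGroup E] [Zero β]

theorem ite_norm_le_eq_indicator_closedBall (g : E → β) (r : ℝ) :
    (fun x => if ‖x‖ ≤ r then g x else 0) = (Metric.closedBall 0 r).indicator g := by
  classical
  ext x
  simp only [indicator_apply, mem_closedBall_zero_iff]

theorem monotone_indicator_closedBall [Preorder β] {g : E → β} (hg0 : 0 ≤ g) :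
    Monotone fun r : ℝ => (Metric.closedBall 0 r).indicator g := fun _ _ hrs =>
  indicator_le_indicator_of_subset (Metric.closedBall_subset_closedBall hrs) hg0

theorem tendsto_indicator_closedBall [TopologicalSpace β] (g : E → β) (x : E) :
    Tendsto (fun m : ℕ => (Metric.closedBall 0 (m : ℝ)).indicator g x) atTop (𝓝 (g x)) := by
  obtain ⟨k, hk⟩ := exists_nat_ge ‖x‖
  refine tendsto_const_nhds.congr' ?_
  filter_upwards [eventually_ge_atTop k] with m hm
  rw [indicator_of_mem (mem_closedBall_zero_iff.2 (hk.trans (Nat.cast_le.2 hm)))]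

end Truncation

theorem first_variation_truncation_general {n : ℕ} {f g : Euc n → ℝ} {G : ℕ → Euc n → ℝ}
    (hf0 : 0 ≤ f) (hflc : LogConcaveFn f) (hfpos : 0 < totalMass f) (hffin : totalMass f < ⊤)
    (hG0 : ∀ m, 0 ≤ G m) (hGlc : ∀ m, LogConcaveFn (G m)) (hG : Monotone G)
    (hlim : ∀ x, Tendsto (fun m => G m x) atTop (𝓝 (g x))) :
    (∀ m, Tendsto (deltaQuot f (G m)) (𝓝[>] 0) (𝓝 (firstVariation f (G m)))) ∧
      Monotone (fun m => firstVariation f (G m)) ∧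
      Tendsto (deltaQuot f g) (𝓝[>] 0) (𝓝 (firstVariation f g)) ∧
      Tendsto (fun m => firstVariation f (G m)) atTop (𝓝 (firstVariation f g)) := by
  have hg0 : 0 ≤ g := fun x => ge_of_tendsto' (hlim x) fun m => hG0 m x
  refine ⟨fun m => ?_, fun i j hij => ?_, ?_, ?_⟩
  · exact tendsto_deltaQuot_firstVariation hflc hf0 hfpos.ne' hffin.ne (hGlc m) (hG0 m)
  · exact firstVariation_mono hflc hf0 hfpos.ne' hffin.ne (hGlc i) (hG0 i) (hGlc j) (hG hij)
  · exact tendsto_deltaQuot_firstVariation hflc hf0 hfpos.ne' hffin.ne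
      (logConcaveFn_of_tendsto hGlc hlim) hg0
  · exact tendsto_firstVariation hflc hf0 hfpos.ne' hffin.ne hG hGlc hG0 hlim

/-- For the truncations `g_m = g · 1_{|x| ≤ m}`, the first variations
`δ(f, g_m)` exist, are nondecreasing in `m`, and converge to `δ(f,g)` in `(-∞, +∞]`. -/
theorem first_variation_truncation (n : ℕ) (f g : Euc n → ℝ)
    (hf0 : ∀ x, 0 ≤ f x) (hfusc : UpperSemicontinuous f) (hflc : LogConcaveFn f)
    (hfpos : 0 < totalMass f) (hffin : totalMass f < ⊤)
    (hg0 : ∀ x, 0 ≤ g x) (hgusc : UpperSemicontinuous g) (hglc : LogConcaveFn g) :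
    ∃ (d : ℕ → EReal) (D : EReal),
      (∀ m : ℕ, Tendsto (deltaQuot f (fun x => if ‖x‖ ≤ (m : ℝ) then g x else 0))
        (𝓝[>] (0 : ℝ)) (𝓝 (d m))) ∧
      Monotone d ∧
      Tendsto (deltaQuot f g) (𝓝[>] (0 : ℝ)) (𝓝 D) ∧
      Tendsto d atTop (𝓝 D) := by
  simp only [ite_norm_le_eq_indicator_closedBall]
  exact ⟨_, _, first_variation_truncation_general hf0 hflc hfpos hffin
    (fun m => indicator_nonneg fun x _ => hg0 x)
    (fun m => hglc.indicator hg0 (convex_closedBall 0 m))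
    ((monotone_indicator_closedBall hg0).comp Nat.mono_cast) (tendsto_indicator_closedBall g)⟩

end
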